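/- Let B be a real Banach space and let C be a nonempty subset of B. Let x ∈ B, jx ∈ J(x), and z ∈ C. If there exists jz ∈ J(z) such that ⟨jx − jz, z − y⟩ ≥ 0 for all y ∈ C, then z ∈ π_C(jx), and hence z ∈ Π_C(x). -/

import Mathlib

open Set Filter

noncomputable section

/-- The normalized duality map `J x = {φ : ⟨φ,x⟩ = ‖x‖² and ‖φ‖ = ‖x‖}`. -/
def dualityMap {B : Type*} [NormedAddCommGroup B] [NormedSpace ℝ B] (x : B) :
    Set (B →L[ℝ] ℝ) :=
  {φ | φ x = ‖x‖ ^ 2 ∧ ‖φ‖ = ‖x‖}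

/-- The Lyapunov functional `V(φ,x) = ‖φ‖² - 2⟨φ,x⟩ + ‖x‖²`. -/
def lyapV {B : Type*} [NormedAddCommGroup B] [NormedSpace ℝ B] (φ : B →L[ℝ] ℝ) (x : B) : ℝ :=
  ‖φ‖ ^ 2 - 2 * φ x + ‖x‖ ^ 2

/-- The generalized projection: the set of minimizers of `V(φ, ·)` over `C`. -/
def genProj {B : Type*} [NormedAddCommGroup B] [NormedSpace ℝ B] (C : Set B)
    (φ : B →L[ℝ] ℝ) : Set B :=
  {u | u ∈ C ∧ ∀ y ∈ C, lyapV φ u ≤ lyapV φ y}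

/-- The generalized metric projection `Π_C x = ⋃_{jx ∈ J x} π_C (jx)`. -/
def genMetricProj {B : Type*} [NormedAddCommGroup B] [NormedSpace ℝ B] (C : Set B) (x : B) :
    Set B :=
  ⋃ φ ∈ dualityMap x, genProj C φ

/-- The metric projection: the set of nearest points to `x` in `C`. -/
def metricProj {B : Type*} [NormedAddCommGroup B] [NormedSpace ℝ B] (C : Set B) (x : B) :
    Set B :=
  {u | u ∈ C ∧ ∀ y ∈ C, ‖x - u‖ ≤ ‖x - y‖}

/-- The set of generalized identical points of `x`. -/
def genIdentical {B : Type*} [NormedAddCommGroup B] [NormedSpace ℝ B] (x : B) : Set B :=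
  {y | (dualityMap x ∩ dualityMap y).Nonempty}

section Lyapunov

variable {B : Type*} [NormedAddCommGroup B] [NormedSpace ℝ B]

theorem sq_norm_sub_norm_le_lyapV (φ : B →L[ℝ] ℝ) (x : B) : (‖φ‖ - ‖x‖) ^ 2 ≤ lyapV φ x := by
  have apply_le : φ x ≤ ‖φ‖ * ‖x‖ := (le_abs_self _).trans (φ.le_opNorm x)
  unfold lyapV
  linarith [sub_sq ‖φ‖ ‖x‖]

theorem lyapV_nonneg (φ : B →L[ℝ] ℝ) (x : B) : 0 ≤ lyapV φ x :=
  (sq_nonneg _).trans (sq_norm_sub_norm_le_lyapV φ x)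

theorem lyapV_eq_zero_of_mem_dualityMap {φ : B →L[ℝ] ℝ} {x : B} (hφ : φ ∈ dualityMap x) :
    lyapV φ x = 0 := by
  rw [lyapV, hφ.1, hφ.2]
  ring

/- `V(φ, ·) - V(ψ, ·)` is affine: the term `‖·‖ ^ 2` cancels, which is why the linear inequality
`0 ≤ (φ - ψ) (z - y)` can transfer minimality at `z` from `ψ` to `φ`. -/
theorem lyapV_sub_lyapV_eq (φ ψ : B →L[ℝ] ℝ) (y z : B) :
    lyapV φ y - lyapV φ z = lyapV ψ y - lyapV ψ z + 2 * (φ - ψ) (z - y) := by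
  simp only [lyapV, sub_apply, map_sub]
  ring

theorem mem_genProj_of_mem_dualityMap {C : Set B} {φ : B →L[ℝ] ℝ} {z : B} (hz : z ∈ C)
    (hφ : φ ∈ dualityMap z) : z ∈ genProj C φ :=
  ⟨hz, fun y _ ↦ (lyapV_eq_zero_of_mem_dualityMap hφ).trans_le (lyapV_nonneg φ y)⟩

theorem mem_genProj_of_mem_genProj_of_forall_nonneg {C : Set B} {φ ψ : B →L[ℝ] ℝ} {z : B}
    (hψ : z ∈ genProj C ψ) (h : ∀ y ∈ C, 0 ≤ (φ - ψ) (z - y)) : z ∈ genProj C φ := by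
  refine ⟨hψ.1, fun y hy ↦ ?_⟩
  linarith [lyapV_sub_lyapV_eq φ ψ y z, hψ.2 y hy, h y hy]

theorem genProj_subset_genMetricProj (C : Set B) {φ : B →L[ℝ] ℝ} {x : B}
    (hφ : φ ∈ dualityMap x) : genProj C φ ⊆ genMetricProj C x :=
  subset_biUnion_of_mem hφ

theorem statement_11_general {C : Set B} {φ : B →L[ℝ] ℝ} {z : B} (hz : z ∈ C)
    (h : ∃ ψ ∈ dualityMap z, ∀ y ∈ C, 0 ≤ (φ - ψ) (z - y)) :
    z ∈ genProj C φ ∧ ∀ x, φ ∈ dualityMap x → z ∈ genMetricProj C x := by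
  obtain ⟨ψ, hψ, hvar⟩ := h
  have hmem : z ∈ genProj C φ :=
    mem_genProj_of_mem_genProj_of_forall_nonneg (mem_genProj_of_mem_dualityMap hz hψ) hvar
  exact ⟨hmem, fun _ hφ ↦ genProj_subset_genMetricProj C hφ hmem⟩

end Lyapunov

theorem statement_11 {B : Type*} [NormedAddCommGroup B] [NormedSpace ℝ B] [CompleteSpace B]
    (C : Set B) (hC : C.Nonempty) (x : B) (jx : B →L[ℝ] ℝ) (hjx : jx ∈ dualityMap x)
    (z : B) (hz : z ∈ C)
    (h : ∃ jz ∈ dualityMap z, ∀ y ∈ C, 0 ≤ (jx - jz) (z - y)) :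
    z ∈ genProj C jx ∧ z ∈ genMetricProj C x :=
  (statement_11_general hz h).imp_right fun hproj ↦ hproj x hjx
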